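/- Let W₁, W₂ be nonempty closed spherically convex subsets of S^d whose intersection X = W₁ ∩ W₂ is nonempty. Then X = 𝒞(W₁°, −(W₂°)); consequently X ∪ (−X) is the separation center set of W₁° and −(W₂°). -/

import Mathlib

open scoped RealInnerProductSpace Pointwise

noncomputable section

/-- Euclidean space `ℝ^{d+1}`. -/
abbrev E (d : ℕ) : Type := EuclideanSpace ℝ (Fin (d + 1))

/-- The unit sphere `S^d ⊆ ℝ^{d+1}`. -/
def sph (d : ℕ) : Set (E d) := {x | ‖x‖ = 1}

/-- The closed hemisphere `H(P)` centered at `P`. -/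
def hemi {d : ℕ} (P : E d) : Set (E d) := {Q ∈ sph d | 0 ≤ ⟪P, Q⟫}

/-- The spherical polar set `W°`. -/
def polar {d : ℕ} (W : Set (E d)) : Set (E d) := {Q ∈ sph d | ∀ P ∈ W, 0 ≤ ⟪P, Q⟫}

/-- The semi-separation center set `𝒞(W₁, W₂)`. -/
def ssc {d : ℕ} (W₁ W₂ : Set (E d)) : Set (E d) :=
  {P ∈ sph d | (∀ Q ∈ W₁, 0 ≤ ⟪P, Q⟫) ∧ ∀ R ∈ W₂, ⟪P, R⟫ ≤ 0}

/-- `W ⊆ S^d` is hemispherical if it misses some closed hemisphere. -/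
def hemispherical {d : ℕ} (W : Set (E d)) : Prop := ∃ P ∈ sph d, W ∩ hemi P = ∅

/-- A hemispherical set is spherically convex if it contains the normalized segment
between any two of its points. -/
def sphConvex {d : ℕ} (W : Set (E d)) : Prop :=
  hemispherical W ∧ ∀ P ∈ W, ∀ Q ∈ W, ∀ t : ℝ, t ∈ Set.Icc (0 : ℝ) 1 →
    (‖t • P + (1 - t) • Q‖)⁻¹ • (t • P + (1 - t) • Q) ∈ W

/-- The spherical convex hull `s-conv(W)`: normalized convex combinations of
finitely many points of `W`. -/
def sconv {d : ℕ} (W : Set (E d)) : Set (E d) :=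
  {x | ∃ (n : ℕ) (P : Fin n → E d) (l : Fin n → ℝ),
    (∀ i, P i ∈ W) ∧ (∀ i, 0 ≤ l i) ∧ (∑ i, l i) = 1 ∧
    x = (‖∑ i, l i • P i‖)⁻¹ • (∑ i, l i • P i)}

/-!
A closed spherically convex set `W` is the trace on the unit sphere of the cone over `W`, which is
convex and closed. The bipolar theorem for such cones therefore gives `W°° = W`. A point lies in
`𝒞(A, −B)` exactly when it lies in both `A°` and `B°`, hence
`𝒞(W₁°, −(W₂°)) = W₁°° ∩ W₂°° = W₁ ∩ W₂`.
-/

open Metric ProperCone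

section Cone

variable {V : Type*} [NormedAddCommGroup V] [NormedSpace ℝ V] {W : Set V}

theorem continuousOn_normalize : ContinuousOn (NormedSpace.normalize : V → V) {0}ᶜ :=
  (continuousOn_id.norm.inv₀ fun _ hx => norm_ne_zero_iff.2 hx).smul continuousOn_id

/-- Spherical convexity of a set of unit vectors in a normed space. Antipodal points impose no
condition at the midpoint of their segment, so whole great spheres are allowed. -/
structure IsSphericallyConvex (W : Set V) : Prop where
  subset_sphere : W ⊆ sphere 0 1
  normalize_mem : ∀ P ∈ W, ∀ Q ∈ W, ∀ R ∈ segment ℝ P Q, R ≠ 0 → NormedSpace.normalize R ∈ W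

/-- The cone over a set `W` of unit vectors: the union of the closed rays from the origin through
the points of `W`. The origin belongs to the cone even when `W` is empty. -/
def coneOver (W : Set V) : Set V := insert 0 (NormedSpace.normalize ⁻¹' W)

theorem zero_mem_coneOver : 0 ∈ coneOver W := Set.mem_insert 0 _

theorem mem_coneOver_of_ne_zero {x : V} (hx : x ≠ 0) :
    x ∈ coneOver W ↔ NormedSpace.normalize x ∈ W :=
  Set.mem_insert_iff.trans (or_iff_right hx)

theorem sphere_inter_coneOver (hW : W ⊆ sphere 0 1) : sphere 0 1 ∩ coneOver W = W := by
  have mem_iff {x : V} (hx : x ∈ sphere 0 1) : x ∈ coneOver W ↔ x ∈ W := by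
    rw [mem_coneOver_of_ne_zero (ne_of_mem_sphere hx one_ne_zero),
      NormedSpace.normalize_eq_self_of_norm_eq_one (mem_sphere_zero_iff_norm.1 hx)]
  ext x
  exact ⟨fun hx => (mem_iff hx.1).1 hx.2, fun hx => ⟨hW hx, (mem_iff (hW hx)).2 hx⟩⟩

theorem coneOver_sphere_inter (C : PointedCone ℝ V) : coneOver (sphere 0 1 ∩ C) = (C : Set V) := by
  ext x
  rcases eq_or_ne x 0 with rfl | hx
  · exact iff_of_true zero_mem_coneOver C.zero_mem
  · rw [mem_coneOver_of_ne_zero hx, Set.mem_inter_iff, mem_sphere_zero_iff_norm,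
      and_iff_right (NormedSpace.norm_normalize hx)]
    exact C.smul_mem_iff (inv_pos.2 (norm_pos_iff.2 hx))

theorem smul_mem_coneOver {c : ℝ} (hc : 0 ≤ c) {x : V} (hx : x ∈ coneOver W) :
    c • x ∈ coneOver W := by
  rcases hc.eq_or_lt with rfl | hc
  · simpa only [zero_smul] using zero_mem_coneOver
  · simpa only [coneOver, Set.mem_insert_iff, smul_eq_zero_iff_right hc.ne', Set.mem_preimage,
      NormedSpace.normalize_smul_of_pos hc] using hx

theorem inv_norm_add_norm_smul_add_mem_segment {x y : V} (hx : x ≠ 0) :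
    (‖x‖ + ‖y‖)⁻¹ • (x + y) ∈
      segment ℝ (NormedSpace.normalize x) (NormedSpace.normalize y) := by
  refine ⟨(‖x‖ + ‖y‖)⁻¹ * ‖x‖, (‖x‖ + ‖y‖)⁻¹ * ‖y‖, by positivity, by positivity, ?_, ?_⟩
  · rw [← mul_add, inv_mul_cancel₀ (by positivity)]
  · simp only [mul_smul, NormedSpace.norm_smul_normalize, smul_add]

theorem IsSphericallyConvex.add_mem_coneOver (hW : IsSphericallyConvex W) {x y : V}
    (hx : x ∈ coneOver W) (hy : y ∈ coneOver W) : x + y ∈ coneOver W := by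
  rcases eq_or_ne x 0 with rfl | hx0
  · rwa [zero_add]
  rcases eq_or_ne y 0 with rfl | hy0
  · rwa [add_zero]
  rcases eq_or_ne (x + y) 0 with hxy | hxy
  · exact hxy ▸ zero_mem_coneOver
  rw [mem_coneOver_of_ne_zero ‹_›] at hx hy ⊢
  have scale_pos : 0 < (‖x‖ + ‖y‖)⁻¹ := by positivity
  rw [← NormedSpace.normalize_smul_of_pos scale_pos]
  exact hW.normalize_mem _ hx _ hy _ (inv_norm_add_norm_smul_add_mem_segment hx0)
    (smul_ne_zero scale_pos.ne' hxy)

theorem isClosed_coneOver (hcl : IsClosed W) : IsClosed (coneOver W) := by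
  have compl_eq : (coneOver W)ᶜ = {0}ᶜ ∩ NormedSpace.normalize ⁻¹' Wᶜ := by
    rw [coneOver, Set.insert_eq, Set.compl_union, Set.preimage_compl]
  rw [← isOpen_compl_iff, compl_eq]
  exact continuousOn_normalize.isOpen_inter_preimage isOpen_compl_singleton hcl.isOpen_compl

/-- The cone over a closed spherically convex set, bundled as a closed convex cone so that the
bipolar theorem applies to it. -/
def IsSphericallyConvex.properCone (hW : IsSphericallyConvex W) (hcl : IsClosed W) :
    ProperCone ℝ V where
  carrier := coneOver W
  add_mem' := hW.add_mem_coneOver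
  zero_mem' := zero_mem_coneOver
  smul_mem' c _ := smul_mem_coneOver c.2
  isClosed' := isClosed_coneOver hcl

theorem IsSphericallyConvex.coe_properCone (hW : IsSphericallyConvex W) (hcl : IsClosed W) :
    (hW.properCone hcl : Set V) = coneOver W :=
  rfl

end Cone

section Polar

variable {V : Type*} [NormedAddCommGroup V] [InnerProductSpace ℝ V]

/-- The spherical polar `W°` in an inner product space. -/
def sphericalPolar (W : Set V) : Set V := {Q ∈ sphere 0 1 | ∀ P ∈ W, 0 ≤ ⟪P, Q⟫}

/-- The semi-separation center set `𝒞(A, B)` in an inner product space. -/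
def semiSeparationCenters (A B : Set V) : Set V :=
  {P ∈ sphere 0 1 | (∀ Q ∈ A, 0 ≤ ⟪P, Q⟫) ∧ ∀ R ∈ B, ⟪P, R⟫ ≤ 0}

theorem semiSeparationCenters_neg_right (A B : Set V) :
    semiSeparationCenters A (-B) = sphericalPolar A ∩ sphericalPolar B := by
  ext P
  simp only [semiSeparationCenters, sphericalPolar, ← Set.image_neg_eq_neg, Set.forall_mem_image,
    inner_neg_right, Left.neg_nonpos_iff, real_inner_comm P, Set.mem_inter_iff, Set.mem_ofPred_eq]
  exact and_and_left

theorem semiSeparationCenters_swap (A B : Set V) :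
    semiSeparationCenters B A = -semiSeparationCenters A B := by
  ext P
  simp only [semiSeparationCenters, mem_sphere_zero_iff_norm, Set.mem_ofPred_eq, Set.mem_neg,
    norm_neg, inner_neg_left, Left.nonneg_neg_iff, Left.neg_nonpos_iff]
  exact and_congr_right' and_comm

variable [CompleteSpace V] {W W₁ W₂ : Set V}

theorem sphericalPolar_eq_sphere_inter_innerDual (W : Set V) :
    sphericalPolar W = sphere 0 1 ∩ innerDual W :=
  rfl

theorem innerDual_coneOver (hW : W ⊆ sphere 0 1) : innerDual (coneOver W) = innerDual W := by
  have subset_coneOver : W ⊆ coneOver W :=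
    (sphere_inter_coneOver hW).symm.subset.trans Set.inter_subset_right
  refine le_antisymm (innerDual_le_innerDual subset_coneOver) fun y hy x hx => ?_
  rcases eq_or_ne x 0 with rfl | hx0
  · simp
  · have normalize_nonneg : 0 ≤ ⟪NormedSpace.normalize x, y⟫ :=
      hy ((mem_coneOver_of_ne_zero hx0).1 hx)
    change 0 ≤ ⟪x, y⟫
    rw [← NormedSpace.norm_smul_normalize x, real_inner_smul_left]
    positivity

theorem innerDual_sphere_inter (C : PointedCone ℝ V) :
    innerDual (sphere 0 1 ∩ C : Set V) = innerDual (C : Set V) := by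
  rw [← innerDual_coneOver Set.inter_subset_left, coneOver_sphere_inter]

theorem sphericalPolar_sphericalPolar (hW : IsSphericallyConvex W) (hcl : IsClosed W) :
    sphericalPolar (sphericalPolar W) = W :=
  calc
    sphericalPolar (sphericalPolar W) = sphere 0 1 ∩ innerDual (innerDual W : Set V) := by
      rw [sphericalPolar_eq_sphere_inter_innerDual, sphericalPolar_eq_sphere_inter_innerDual]
      congr 2
      exact innerDual_sphere_inter (innerDual W).toPointedCone
    _ = sphere 0 1 ∩ innerDual (innerDual (hW.properCone hcl : Set V) : Set V) := by
      rw [hW.coe_properCone, innerDual_coneOver hW.subset_sphere]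
    _ = sphere 0 1 ∩ coneOver W := by rw [innerDual_innerDual, hW.coe_properCone]
    _ = W := sphere_inter_coneOver hW.subset_sphere

theorem stmt_2_general (hW₁ : IsSphericallyConvex W₁) (hW₂ : IsSphericallyConvex W₂)
    (hcl₁ : IsClosed W₁) (hcl₂ : IsClosed W₂) :
    W₁ ∩ W₂ = semiSeparationCenters (sphericalPolar W₁) (-sphericalPolar W₂) ∧
      (W₁ ∩ W₂) ∪ -(W₁ ∩ W₂) =
        semiSeparationCenters (sphericalPolar W₁) (-sphericalPolar W₂) ∪
          semiSeparationCenters (-sphericalPolar W₂) (sphericalPolar W₁) := by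
  have inter_eq : W₁ ∩ W₂ = semiSeparationCenters (sphericalPolar W₁) (-sphericalPolar W₂) := by
    rw [semiSeparationCenters_neg_right, sphericalPolar_sphericalPolar hW₁ hcl₁,
      sphericalPolar_sphericalPolar hW₂ hcl₂]
  exact ⟨inter_eq, by rw [semiSeparationCenters_swap (sphericalPolar W₁), ← inter_eq]⟩

end Polar

section EuclideanSphere

variable {d : ℕ}

theorem sph_eq_sphere : sph d = sphere 0 1 := by
  ext x
  exact mem_sphere_zero_iff_norm.symm

theorem polar_eq_sphericalPolar (W : Set (E d)) : polar W = sphericalPolar W := by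
  rw [polar, sph_eq_sphere, sphericalPolar]

theorem ssc_eq_semiSeparationCenters (A B : Set (E d)) : ssc A B = semiSeparationCenters A B := by
  rw [ssc, sph_eq_sphere, semiSeparationCenters]

theorem sphConvex.isSphericallyConvex {W : Set (E d)} (hcv : sphConvex W) (hW : W ⊆ sph d) :
    IsSphericallyConvex W where
  subset_sphere := hW.trans sph_eq_sphere.subset
  normalize_mem P hP Q hQ R hR _ := by
    obtain ⟨a, b, ha, hb, hab, rfl⟩ := hR
    obtain rfl : b = 1 - a := by linarith
    exact hcv.2 P hP Q hQ a ⟨ha, by linarith⟩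

end EuclideanSphere

/-- If `X = W₁ ∩ W₂` is nonempty, then `X = 𝒞(W₁°, −(W₂°))`; consequently
`X ∪ (−X)` is the separation center set of `W₁°` and `−(W₂°)`. -/
theorem stmt_2 (d : ℕ) (W₁ W₂ : Set (E d)) (hW₁ : W₁ ⊆ sph d) (hW₂ : W₂ ⊆ sph d)
    (hne₁ : W₁.Nonempty) (hne₂ : W₂.Nonempty)
    (hcl₁ : IsClosed W₁) (hcl₂ : IsClosed W₂)
    (hcv₁ : sphConvex W₁) (hcv₂ : sphConvex W₂)
    (hX : (W₁ ∩ W₂).Nonempty) :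
    W₁ ∩ W₂ = ssc (polar W₁) (-(polar W₂)) ∧
      (W₁ ∩ W₂) ∪ (-(W₁ ∩ W₂)) =
        ssc (polar W₁) (-(polar W₂)) ∪ ssc (-(polar W₂)) (polar W₁) := by
  simpa only [polar_eq_sphericalPolar, ssc_eq_semiSeparationCenters] using
    stmt_2_general (hcv₁.isSphericallyConvex hW₁) (hcv₂.isSphericallyConvex hW₂) hcl₁ hcl₂
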